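/- (Optimality of the linear decay rate.) Let d ≥ 1 be an integer and let ν, s ∈ ℝ with s > ν. There are constants c, C > 0 depending only on d, s, ν such that for every measurable function h : ℝ^d → ℂ (playing the role of the Fourier transform ĝ₀ of the initial datum) with sup_{j∈ℤ} ∫_{C_j} |ξ|^{ν} |h(ξ)| dξ < ∞, where C_j = {ξ ∈ ℝ^d : 2^{j-1} ≤ |ξ| < 2^j}, one has c · sup_{j∈ℤ} ∫_{C_j} |ξ|^{ν} |h(ξ)| dξ ≤ sup_{t>0} t^{s-ν} ∫_{ℝ^d} |ξ|^s e^{-t|ξ|} |h(ξ)| dξ ≤ C · sup_{j∈ℤ} ∫_{C_j} |ξ|^{ν} |h(ξ)| dξ. (On the Fourier side, ∫_{ℝ^d} |ξ|^s e^{-t|ξ|} |h(ξ)| dξ equals the s-norm ‖e^{-tΛ} g₀‖_s of the solution of the linearized Muskat equation ∂_t g = -Λg, where (Λg)^(ξ) = |ξ| ĝ(ξ).) -/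

import Mathlib

open MeasureTheory Real FourierTransform
open scoped FourierTransform ENNReal

noncomputable section

/-- The dyadic annulus `C_j = {ξ ∈ ℝ^d : 2^{j-1} ≤ |ξ| < 2^j}`. -/
def annulus (d : ℕ) (j : ℤ) : Set (EuclideanSpace ℝ (Fin d)) :=
  {ξ | (2 : ℝ) ^ (j - 1) ≤ ‖ξ‖ ∧ ‖ξ‖ < (2 : ℝ) ^ j}

/-- The Besov-type quantity `sup_{j∈ℤ} ∫_{C_j} |ξ|^ν |h(ξ)| dξ` for a function `h`
playing the role of the Fourier transform `ĝ₀` of the initial datum. -/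
noncomputable def besovOfFT (d : ℕ) (ν : ℝ) (h : EuclideanSpace ℝ (Fin d) → ℂ) : ℝ≥0∞ :=
  ⨆ j : ℤ, ∫⁻ ξ in annulus d j, ENNReal.ofReal (‖ξ‖ ^ ν * ‖h ξ‖)

/-- `sup_{t>0} t^{s-ν} ∫_{ℝ^d} |ξ|^s e^{-t|ξ|} |h(ξ)| dξ`, i.e.
`sup_{t>0} t^{s-ν} ‖e^{-tΛ} g₀‖ₛ` on the Fourier side, where `h = ĝ₀`. -/
noncomputable def linearDecaySup (d : ℕ) (s ν : ℝ) (h : EuclideanSpace ℝ (Fin d) → ℂ) :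
    ℝ≥0∞ :=
  ⨆ t : {t : ℝ // 0 < t}, ENNReal.ofReal ((t : ℝ) ^ (s - ν)) *
    ∫⁻ ξ : EuclideanSpace ℝ (Fin d),
      ENNReal.ofReal (‖ξ‖ ^ s * Real.exp (-(t : ℝ) * ‖ξ‖) * ‖h ξ‖)

lemma aux_pow_exp (b x : ℝ) (hb : 0 < b) (hx : 0 < x) : x ^ b ≤ b ^ b * Real.exp x := by
  have h1 : x / b ≤ Real.exp (x / b) := by
    have := Real.add_one_le_exp (x / b)
    linarith
  have h2 : (x / b) ^ b ≤ (Real.exp (x / b)) ^ b :=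
    Real.rpow_le_rpow (by positivity) h1 hb.le
  rw [← Real.exp_mul, div_mul_cancel₀ _ hb.ne', Real.div_rpow hx.le hb.le,
    div_le_iff₀ (by positivity)] at h2
  linarith

lemma aux_zpow (a : ℝ) (n : ℤ) : ((2 : ℝ) ^ n) ^ a = ((2 : ℝ) ^ a) ^ n := by
  rw [← Real.rpow_intCast, ← Real.rpow_intCast, ← Real.rpow_mul (by norm_num),
    ← Real.rpow_mul (by norm_num), mul_comm]

lemma aux_bound (a : ℝ) (ha : 0 < a) (n : ℤ) (x : ℝ) (h1 : (2 : ℝ) ^ (n - 2) ≤ x)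
    (h2 : x ≤ (2 : ℝ) ^ n) :
    x ^ a * Real.exp (-x) ≤
      (1 + (2 * a) ^ (2 * a) * ((2 : ℝ) ^ a) ^ 2) * (((2 : ℝ) ^ a)⁻¹) ^ n.natAbs := by
  have hx : 0 < x := lt_of_lt_of_le (by positivity) h1
  have hP : 0 < (2 * a) ^ (2 * a) := by positivity
  have hr : 0 < ((2 : ℝ) ^ a) := by positivity
  rcases le_total 0 n with hn | hn
  · lift n to ℕ using hn
    have e1 : x ^ (2 * a) = x ^ a * x ^ a := by rw [two_mul, Real.rpow_add hx]
    have k1 := aux_pow_exp (2 * a) x (by positivity) hx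
    have k2 : ((2 : ℝ) ^ ((n : ℤ) - 2)) ^ a ≤ x ^ a := Real.rpow_le_rpow (by positivity) h1 ha.le
    rw [aux_zpow, zpow_sub₀ hr.ne', zpow_natCast] at k2
    have e2 : ((2 : ℝ) ^ a) ^ (2 : ℤ) = ((2 : ℝ) ^ a) ^ 2 := by norm_cast
    rw [e2, div_le_iff₀ (by positivity)] at k2
    simp only [Int.natAbs_natCast]
    rw [Real.exp_neg, inv_pow, ← div_eq_mul_inv, ← div_eq_mul_inv,
      div_le_div_iff₀ (Real.exp_pos x) (by positivity)]
    have hxa : 0 < x ^ a := by positivity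
    rw [e1] at k1
    calc x ^ a * ((2 : ℝ) ^ a) ^ n ≤ x ^ a * (x ^ a * ((2 : ℝ) ^ a) ^ 2) := by gcongr
      _ = (x ^ a * x ^ a) * ((2 : ℝ) ^ a) ^ 2 := by ring
      _ ≤ ((2 * a) ^ (2 * a) * Real.exp x) * ((2 : ℝ) ^ a) ^ 2 := by gcongr
      _ ≤ _ := by nlinarith [Real.exp_pos x]
  · obtain ⟨m, rfl⟩ : ∃ m : ℕ, n = -(m : ℤ) := ⟨n.natAbs, by omega⟩
    have k2 : x ^ a ≤ ((2 : ℝ) ^ (-(m : ℤ))) ^ a := Real.rpow_le_rpow hx.le h2 ha.le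
    rw [aux_zpow, zpow_neg, zpow_natCast, ← inv_pow] at k2
    simp only [Int.natAbs_neg, Int.natAbs_natCast]
    have k3 : Real.exp (-x) ≤ 1 := Real.exp_le_one_iff.2 (by linarith)
    calc x ^ a * Real.exp (-x) ≤ x ^ a * 1 := by gcongr
      _ = 1 * x ^ a := by ring
      _ ≤ _ := by
        gcongr
        have : 0 < (2 * a) ^ (2 * a) * ((2 : ℝ) ^ a) ^ 2 := by positivity
        linarith

lemma aux_summable (r B : ℝ) (h0 : 0 ≤ r) (h1 : r < 1) :
    Summable (fun n : ℤ => B * r ^ n.natAbs) := by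
  apply Summable.mul_left
  apply Summable.of_nat_of_neg
  · simpa using summable_geometric_of_lt_one h0 h1
  · simpa using summable_geometric_of_lt_one h0 h1

lemma aux_meas (d : ℕ) (j : ℤ) : MeasurableSet (annulus d j) := by
  unfold annulus
  exact (measurableSet_le measurable_const measurable_norm).inter
    (measurableSet_lt measurable_norm measurable_const)

lemma aux_split (s ν t y : ℝ) (ht : 0 < t) (hy : 0 < y) :
    t ^ (s - ν) * y ^ s = (t * y) ^ (s - ν) * y ^ ν := by
  rw [Real.mul_rpow ht.le hy.le, mul_assoc, ← Real.rpow_add hy]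
  congr 2
  ring

/-- Optimality of the linear decay rate for the semigroup `e^{-tΛ}`. -/
theorem stmt8 (d : ℕ) (hd : 1 ≤ d) (ν s : ℝ) (hs : ν < s) :
    ∃ c > (0 : ℝ), ∃ C > (0 : ℝ), ∀ h : EuclideanSpace ℝ (Fin d) → ℂ, Measurable h →
      besovOfFT d ν h < ⊤ →
      ENNReal.ofReal c * besovOfFT d ν h ≤ linearDecaySup d s ν h ∧
        linearDecaySup d s ν h ≤ ENNReal.ofReal C * besovOfFT d ν h := by
  have ha : 0 < s - ν := sub_pos.2 hs
  set r : ℝ := ((2 : ℝ) ^ (s - ν))⁻¹ with hr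
  set B : ℝ := 1 + (2 * (s - ν)) ^ (2 * (s - ν)) * ((2 : ℝ) ^ (s - ν)) ^ 2 with hB
  have hr0 : 0 < r := by positivity
  have hB0 : 0 < B := by positivity
  have hr1 : r < 1 := inv_lt_one_of_one_lt₀ (Real.one_lt_rpow (by norm_num) ha)
  have hsum := aux_summable r B hr0.le hr1
  have hC : 0 < ∑' n : ℤ, B * r ^ n.natAbs :=
    hsum.tsum_pos (fun n => by positivity) 0 (by positivity)
  refine ⟨r * Real.exp (-1), by positivity, _, hC, fun h _ _ => ⟨?_, ?_⟩⟩
  · unfold besovOfFT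
    rw [ENNReal.mul_iSup]
    refine iSup_le fun j => ?_
    have ht : (0 : ℝ) < ((2 : ℝ) ^ j)⁻¹ := by positivity
    refine le_trans ?_ (le_iSup _ (⟨((2 : ℝ) ^ j)⁻¹, ht⟩ : {t : ℝ // 0 < t}))
    simp only
    rw [← lintegral_const_mul' _ _ ENNReal.ofReal_ne_top,
      ← lintegral_const_mul' _ _ ENNReal.ofReal_ne_top]
    refine le_trans ?_ (setLIntegral_le_lintegral (annulus d j) _)
    refine setLIntegral_mono' (aux_meas d j) fun ξ hξ => ?_
    rw [← ENNReal.ofReal_mul (by positivity), ← ENNReal.ofReal_mul (by positivity)]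
    refine ENNReal.ofReal_le_ofReal ?_
    obtain ⟨h1, h2⟩ := hξ
    have hξ0 : 0 < ‖ξ‖ := lt_of_lt_of_le (by positivity) h1
    generalize ‖ξ‖ = y at *
    have e := aux_split s ν _ y ht hξ0
    have l1 : (2 : ℝ)⁻¹ ≤ ((2 : ℝ) ^ j)⁻¹ * y := by
      rw [zpow_sub₀ (by norm_num), zpow_one] at h1
      rw [← div_eq_inv_mul, le_div_iff₀ (by positivity)]
      linarith
    have l2 : ((2 : ℝ) ^ j)⁻¹ * y ≤ 1 := by
      rw [← div_eq_inv_mul, div_le_one (by positivity)]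
      exact h2.le
    have l3 : r ≤ (((2 : ℝ) ^ j)⁻¹ * y) ^ (s - ν) := by
      rw [hr, ← Real.inv_rpow (by norm_num)]
      exact Real.rpow_le_rpow (by norm_num) l1 ha.le
    have l4 : Real.exp (-1) ≤ Real.exp (-((2 : ℝ) ^ j)⁻¹ * y) := by
      apply Real.exp_le_exp.2
      linarith
    calc r * Real.exp (-1) * (y ^ ν * ‖h ξ‖)
        ≤ (((2 : ℝ) ^ j)⁻¹ * y) ^ (s - ν) * Real.exp (-((2 : ℝ) ^ j)⁻¹ * y)
          * (y ^ ν * ‖h ξ‖) := by gcongr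
      _ = ((((2 : ℝ) ^ j)⁻¹ * y) ^ (s - ν) * y ^ ν) * Real.exp (-((2 : ℝ) ^ j)⁻¹ * y)
          * ‖h ξ‖ := by ring
      _ = _ := by rw [← e]; ring
  · refine iSup_le fun ⟨t, ht⟩ => ?_
    simp only
    obtain ⟨k, hk1, hk2⟩ := exists_mem_Ico_zpow ht (one_lt_two (α := ℝ))
    have : Nonempty (Fin d) := ⟨⟨0, hd⟩⟩
    have hcov : (⋃ j : ℤ, annulus d j) =ᵐ[volume] (Set.univ : Set (EuclideanSpace ℝ (Fin d))) := by
      rw [ae_eq_univ]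
      refine measure_mono_null ?_ (measure_singleton (0 : EuclideanSpace ℝ (Fin d)))
      intro ξ hξ
      by_contra hne
      apply hξ
      obtain ⟨n, hn1, hn2⟩ := exists_mem_Ico_zpow (norm_pos_iff.2 hne) (one_lt_two (α := ℝ))
      exact Set.mem_iUnion.2 ⟨n + 1, by simpa using hn1, hn2⟩
    rw [← lintegral_const_mul' _ _ ENNReal.ofReal_ne_top, ← setLIntegral_univ,
      ← setLIntegral_congr hcov]
    refine (lintegral_iUnion_le _ _).trans ?_
    have hshift : ∑' n : ℤ, B * r ^ n.natAbs = ∑' j : ℤ, B * r ^ (j + (k + 1)).natAbs :=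
      ((Equiv.addRight (k + 1)).tsum_eq (fun n : ℤ => B * r ^ n.natAbs)).symm
    have hsum' : Summable (fun j : ℤ => B * r ^ (j + (k + 1)).natAbs) :=
      hsum.comp_injective (i := fun j : ℤ => j + (k + 1)) (add_left_injective (k + 1))
    rw [hshift, ENNReal.ofReal_tsum_of_nonneg (fun n => by positivity) hsum',
      ← ENNReal.tsum_mul_right]
    refine ENNReal.tsum_le_tsum fun j => ?_
    refine le_trans ?_ (mul_le_mul_right (le_iSup (fun j : ℤ =>
      ∫⁻ ξ in annulus d j, ENNReal.ofReal (‖ξ‖ ^ ν * ‖h ξ‖)) j) _)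
    rw [← lintegral_const_mul' _ _ ENNReal.ofReal_ne_top]
    refine setLIntegral_mono' (aux_meas d j) fun ξ hξ => ?_
    rw [← ENNReal.ofReal_mul (by positivity), ← ENNReal.ofReal_mul (by positivity)]
    refine ENNReal.ofReal_le_ofReal ?_
    obtain ⟨h1, h2⟩ := hξ
    have hξ0 : 0 < ‖ξ‖ := lt_of_lt_of_le (by positivity) h1
    generalize ‖ξ‖ = y at *
    have e := aux_split s ν t y ht hξ0
    have l1 : (2 : ℝ) ^ (j + (k + 1) - 2) ≤ t * y := by
      have : (2 : ℝ) ^ (j + (k + 1) - 2) = 2 ^ k * 2 ^ (j - 1) := by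
        rw [← zpow_add₀ (by norm_num)]
        congr 1
        ring
      rw [this]
      gcongr
    have l2 : t * y ≤ (2 : ℝ) ^ (j + (k + 1)) := by
      rw [add_comm j, zpow_add₀ (by norm_num)]
      gcongr
    have l3 := aux_bound (s - ν) ha _ _ l1 l2
    calc t ^ (s - ν) * (y ^ s * Real.exp (-t * y) * ‖h ξ‖)
        = (t ^ (s - ν) * y ^ s) * Real.exp (-(t * y)) * ‖h ξ‖ := by rw [neg_mul]; ring
      _ = ((t * y) ^ (s - ν) * Real.exp (-(t * y))) * (y ^ ν * ‖h ξ‖) := by rw [e]; ring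
      _ ≤ _ := by gcongr
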